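/- Let H ⊴ G be a normal embedding of linearly reductive quantum groups (a normal Hopf algebra surjection O(G) → O(H) with both Hopf algebras cosemisimple), and define the relation ∼ between Ĝ and Ĥ by: V ∼ W iff hom_H(Res^G_H V, W) ≠ 0, equivalently hom_G(V, Ind^G_H W) ≠ 0. Then: (a) the left-hand slices slice_W = {V ∈ Ĝ : V ∼ W}, W ∈ Ĥ, are precisely the classes of the equivalence relation ∼_G on Ĝ given by V ∼_G V′ iff Res^G_H V and Res^G_H V′ have the same simple constituents; and (b) the right-hand slices _V slice = {W ∈ Ĥ : V ∼ W}, V ∈ Ĝ, are precisely the (finite) classes of an equivalence relation on Ĥ. -/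

import Mathlib

/- Common infrastructure: right comodules over coalgebras, simplicity,
cosemisimplicity, subcoalgebras, adjoint coactions, normality, etc. -/

open TensorProduct

universe u

namespace QG

variable (k : Type u) [Field k]

section Coalg

variable (C : Type u) [AddCommGroup C] [Module k C] [Coalgebra k C]

/-- `ρ : V →ₗ[k] V ⊗[k] C` is a (coassociative, counital) right coaction. -/
structure IsComod {V : Type u} [AddCommGroup V] [Module k V]
    (ρ : V →ₗ[k] V ⊗[k] C) : Prop where
  coassoc : ∀ v : V, ρ.rTensor C (ρ v) =
    (TensorProduct.assoc k V C C).symm.toLinearMap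
      ((Coalgebra.comul (R := k) (A := C)).lTensor V (ρ v))
  counit : ∀ v : V, (TensorProduct.rid k V)
      ((Coalgebra.counit (R := k) (A := C)).lTensor V (ρ v)) = v

/-- A submodule `U ≤ V` is a subcomodule if the coaction restricts to it,
i.e. maps `U` into the image of `U ⊗ C` in `V ⊗ C`. -/
def IsSubcomod {V : Type u} [AddCommGroup V] [Module k V]
    (ρ : V →ₗ[k] V ⊗[k] C) (U : Submodule k V) : Prop :=
  ∀ u ∈ U, ρ u ∈ LinearMap.range ((U.subtype).rTensor C)

/-- A simple subcomodule: a nonzero subcomodule with no nonzero proper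
subcomodules below it. -/
def IsSimpleSubcomod {V : Type u} [AddCommGroup V] [Module k V]
    (ρ : V →ₗ[k] V ⊗[k] C) (U : Submodule k V) : Prop :=
  IsSubcomod k C ρ U ∧ U ≠ ⊥ ∧
    ∀ U' : Submodule k V, U' ≤ U → IsSubcomod k C ρ U' → U' = ⊥ ∨ U' = U

/-- A comodule is simple if it is simple as a subcomodule of itself. -/
def IsSimpleComod {V : Type u} [AddCommGroup V] [Module k V]
    (ρ : V →ₗ[k] V ⊗[k] C) : Prop :=
  IsSimpleSubcomod k C ρ ⊤

/-- Morphisms of right `C`-comodules. -/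
def IsComodHom {V W : Type u} [AddCommGroup V] [Module k V]
    [AddCommGroup W] [Module k W]
    (ρV : V →ₗ[k] V ⊗[k] C) (ρW : W →ₗ[k] W ⊗[k] C) (f : V →ₗ[k] W) : Prop :=
  ρW ∘ₗ f = (f.rTensor C) ∘ₗ ρV

/-- `C` is cosemisimple: every right `C`-comodule is an (internal) direct sum
of simple subcomodules. -/
def IsCosemisimple : Prop :=
  ∀ (V : Type u) [AddCommGroup V] [Module k V]
    (ρ : V →ₗ[k] V ⊗[k] C), IsComod k C ρ →
    ∃ (ι : Type u) (U : ι → Submodule k V),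
      (∀ i, IsSimpleSubcomod k C ρ (U i)) ∧
      iSupIndep U ∧ (⨆ i, U i) = ⊤

/-- Subcoalgebras of `C`, as submodules. -/
def IsSubcoalgebra (D : Submodule k C) : Prop :=
  ∀ x ∈ D, Coalgebra.comul (R := k) x ∈
    LinearMap.range (TensorProduct.map D.subtype D.subtype)

/-- Simple subcoalgebras: nonzero ones with no nonzero proper subcoalgebras. -/
def IsSimpleSubcoalgebra (D : Submodule k C) : Prop :=
  IsSubcoalgebra k C D ∧ D ≠ ⊥ ∧
    ∀ D' : Submodule k C, D' ≤ D → IsSubcoalgebra k C D' → D' = ⊥ ∨ D' = D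

/-- The coefficient space of a comodule: the smallest submodule `D ≤ C` such
that the coaction factors through `V ⊗ D`.  For a simple comodule this is its
coefficient coalgebra. -/
def coeffSpace {V : Type u} [AddCommGroup V] [Module k V]
    (ρ : V →ₗ[k] V ⊗[k] C) : Submodule k C :=
  sInf {D : Submodule k C | ∀ v : V, ρ v ∈ LinearMap.range ((D.subtype).lTensor V)}

/-- Corestriction of a coaction along a linear map of coalgebras `π : C → D`. -/
noncomputable def cores {D : Type u} [AddCommGroup D] [Module k D]
    {V : Type u} [AddCommGroup V] [Module k V]
    (π : C →ₗ[k] D) (ρ : V →ₗ[k] V ⊗[k] C) : V →ₗ[k] V ⊗[k] D :=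
  (π.lTensor V) ∘ₗ ρ

end Coalg

section Bialg

variable (H : Type u) [Ring H] [Bialgebra k H]

/-- An invariant vector for a coaction of a bialgebra. -/
def IsInvariant {V : Type u} [AddCommGroup V] [Module k V]
    (ρ : V →ₗ[k] V ⊗[k] H) (v : V) : Prop :=
  ρ v = v ⊗ₜ[k] (1 : H)

/-- The tensor product coaction on `V ⊗ W` for a bialgebra `H`:
`v ⊗ w ↦ (v₀ ⊗ w₀) ⊗ v₁w₁`. -/
noncomputable def tensorCoact {V W : Type u}
    [AddCommGroup V] [Module k V] [AddCommGroup W] [Module k W]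
    (ρV : V →ₗ[k] V ⊗[k] H) (ρW : W →ₗ[k] W ⊗[k] H) :
    (V ⊗[k] W) →ₗ[k] (V ⊗[k] W) ⊗[k] H :=
  ((LinearMap.mul' k H).lTensor (V ⊗[k] W)) ∘ₗ
    (TensorProduct.tensorTensorTensorComm k V H W H).toLinearMap ∘ₗ
    (TensorProduct.map ρV ρW)

/-- `O(G/H)`: the right coinvariants `{x | (id ⊗ π)Δ(x) = x ⊗ 1}` of a
quotient map `π`. -/
noncomputable def quotientSpaceLeft {B : Type u} [AddCommGroup B] [Module k B] [One B]
    (π : H →ₗ[k] B) : Submodule k H :=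
  LinearMap.ker ((π.lTensor H) ∘ₗ (Coalgebra.comul (R := k) (A := H)) -
    (TensorProduct.mk k H B).flip 1)

/-- `O(H\G)`: the left coinvariants `{x | (π ⊗ id)Δ(x) = 1 ⊗ x}`. -/
noncomputable def quotientSpaceRight {B : Type u} [AddCommGroup B] [Module k B] [One B]
    (π : H →ₗ[k] B) : Submodule k H :=
  LinearMap.ker ((π.rTensor H) ∘ₗ (Coalgebra.comul (R := k) (A := H)) -
    (TensorProduct.mk k B H) 1)

end Bialg

section Hopf

variable (H : Type u) [Ring H] [HopfAlgebra k H]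

/-- Iterated comultiplication `x ↦ x₁ ⊗ (x₂ ⊗ x₃)`. -/
noncomputable def comul2 : H →ₗ[k] H ⊗[k] (H ⊗[k] H) :=
  ((Coalgebra.comul (R := k) (A := H)).lTensor H) ∘ₗ (Coalgebra.comul (R := k) (A := H))

/-- The right adjoint coaction `x ↦ x₂ ⊗ S(x₁)x₃`. -/
noncomputable def adR : H →ₗ[k] H ⊗[k] H :=
  ((LinearMap.mul' k H).lTensor H) ∘ₗ
    (TensorProduct.assoc k H H H).toLinearMap ∘ₗ
    (((TensorProduct.comm k H H).toLinearMap).rTensor H) ∘ₗ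
    (TensorProduct.assoc k H H H).symm.toLinearMap ∘ₗ
    ((HopfAlgebra.antipode (R := k) (A := H)).rTensor (H ⊗[k] H)) ∘ₗ
    comul2 k H

/-- The left adjoint coaction `x ↦ x₁S(x₃) ⊗ x₂` (a left coaction, with the
coacting tensorand on the left). -/
noncomputable def adL : H →ₗ[k] H ⊗[k] H :=
  ((LinearMap.mul' k H).rTensor H) ∘ₗ
    (TensorProduct.assoc k H H H).symm.toLinearMap ∘ₗ
    (((TensorProduct.comm k H H).toLinearMap).lTensor H) ∘ₗ
    (((HopfAlgebra.antipode (R := k) (A := H)).lTensor H).lTensor H) ∘ₗ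
    comul2 k H

variable {B : Type u} [AddCommGroup B] [Module k B]

/-- `π : O(G) → O(H)` is right-normal: it is a morphism of right
`O(G)`-comodules for the right adjoint coaction, i.e. the right adjoint
coaction descends along `π`. -/
def IsRightNormal (π : H →ₗ[k] B) : Prop :=
  ∃ ρ : B →ₗ[k] B ⊗[k] H, ρ ∘ₗ π = (π.rTensor H) ∘ₗ adR k H

/-- `π : O(G) → O(H)` is left-normal: the left adjoint coaction descends
along `π`. -/
def IsLeftNormal (π : H →ₗ[k] B) : Prop :=
  ∃ lam : B →ₗ[k] H ⊗[k] B, lam ∘ₗ π = (π.lTensor H) ∘ₗ adL k H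

end Hopf

end QG

namespace QG

variable (k : Type u) [Field k]

section Coalg2

variable (C : Type u) [AddCommGroup C] [Module k C] [Coalgebra k C]

/-- A bundled simple right `C`-comodule. -/
structure SimpleComodule where
  V : Type u
  [addCommGroup : AddCommGroup V]
  [module : Module k V]
  ρ : V →ₗ[k] V ⊗[k] C
  isComod : IsComod k C ρ
  isSimple : IsSimpleComod k C ρ

attribute [instance] SimpleComodule.addCommGroup SimpleComodule.module

/-- A simple comodule `(T, ρT)` is a constituent of a comodule `(V, ρV)`
(over a cosemisimple coalgebra) iff there is a nonzero comodule map `T → V`. -/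
def IsConstituent {T V : Type u} [AddCommGroup T] [Module k T]
    [AddCommGroup V] [Module k V]
    (ρT : T →ₗ[k] T ⊗[k] C) (ρV : V →ₗ[k] V ⊗[k] C) : Prop :=
  ∃ f : T →ₗ[k] V, f ≠ 0 ∧ IsComodHom k C ρT ρV f

/-- Isomorphism of (simple) comodules. -/
def comodIsoRel (X Y : SimpleComodule k C) : Prop :=
  ∃ e : X.V ≃ₗ[k] Y.V, IsComodHom k C X.ρ Y.ρ e.toLinearMap

/-- The set `Ĉ` of isomorphism classes of simple right `C`-comodules. -/
def SimpleComodQuot := Quot (comodIsoRel k C)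

/-- The isomorphism class of a simple comodule. -/
def SimpleComodule.cls (X : SimpleComodule k C) : SimpleComodQuot k C :=
  Quot.mk _ X

/-- Group-like elements of a coalgebra; these correspond to the
one-dimensional comodules, i.e. to characters. -/
def IsGroupLike (a : C) : Prop :=
  Coalgebra.counit (R := k) (A := C) a = (1 : k) ∧
    Coalgebra.comul (R := k) (A := C) a = a ⊗ₜ[k] a

/-- A linear map `φ : C → Z` out of a coalgebra is central if
`φ(x₁) ⊗ x₂ = φ(x₂) ⊗ x₁`. -/
def IsCentralMap {Z : Type u} [AddCommGroup Z] [Module k Z] (φ : C →ₗ[k] Z) : Prop :=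
  (φ.rTensor C) ∘ₗ (Coalgebra.comul (R := k) (A := C)) =
    (φ.rTensor C) ∘ₗ (TensorProduct.comm k C C).toLinearMap ∘ₗ
      (Coalgebra.comul (R := k) (A := C))

/-- The simple comodule `X` has "central character" `g` with respect to the
quotient map `γ : C → Z`: corestricted along `γ`, the coaction on `X` is a sum
of copies of the character `g`. -/
def HasCentralChar {Z : Type u} [AddCommGroup Z] [Module k Z]
    (γ : C →ₗ[k] Z) (X : SimpleComodule k C) (g : Z) : Prop :=
  ∀ v : X.V, cores k C γ X.ρ v = v ⊗ₜ[k] g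

end Coalg2

/-- The k-span of the set of products `g * a`, `a ∈ Am`; for `Am` a submodule
this is the left ideal generated by `Am`. -/
def leftIdealGen {G : Type u} [Ring G] [Module k G] (Am : Submodule k G) :
    Submodule k G :=
  Submodule.span k {x : G | ∃ g : G, ∃ a ∈ Am, x = g * a}

end QG

namespace QG

variable (k : Type u) [Field k]
variable {G Hh : Type u} [Ring G] [HopfAlgebra k G] [Ring Hh] [HopfAlgebra k Hh]

/-- The relation `∼` between `Ĝ` and `Ĥ` for an embedding `H ≤ G`:
`V ∼ W` iff `hom_H(Res^G_H V, W) ≠ 0` (equivalently, by the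
induction–restriction adjunction, `hom_G(V, Ind^G_H W) ≠ 0`). -/
noncomputable def relRes (π : G →ₐc[k] Hh) :
    SimpleComodQuot k G → SimpleComodQuot k Hh → Prop :=
  fun x w => ∃ (X : SimpleComodule k G) (W : SimpleComodule k Hh),
    X.cls = x ∧ W.cls = w ∧
    ∃ f : X.V →ₗ[k] W.V, f ≠ 0 ∧
      IsComodHom k Hh (cores k G (π : G →ₗ[k] Hh) X.ρ) W.ρ f

/-- The relation `∼_G` on `Ĝ`: `V ∼_G V'` iff `Res^G_H V` and `Res^G_H V'`
have the same simple constituents. -/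
noncomputable def relResG (π : G →ₐc[k] Hh) :
    SimpleComodQuot k G → SimpleComodQuot k G → Prop :=
  fun x x' => ∀ w : SimpleComodQuot k Hh, relRes k π x w ↔ relRes k π x' w

end QG

/-!
Restriction of a simple `G`-comodule to `H` is finite-dimensional and semisimple, so everything
rests on showing that `Res V` and `Res V'` have the same simple constituents as soon as they share
one. Let `a`, `b` be the coefficient matrices of `V`, `V'` in bases and let `F` be the matrix of an
`H`-morphism `Res V → Res V'`. Since the right adjoint coaction descends to `O(H)`, applying any
functional to the entries of `b F S(a)` yields the matrix of another `H`-morphism. As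
`b F = (b F S(a)) a`, the span in `V'` of the images of all `H`-morphisms `Res V → Res V'` is
therefore stable under `G`. If `V'` is simple and some such morphism is nonzero, this span is `V'`,
so every simple quotient of `Res V'` is one of `Res V`.
-/

namespace QG

lemma exists_comp_ne_zero_of_iSup_range_eq_top {R : Type*} [Ring R] {ι : Sort*} {N : ι → Type*}
    {M P : Type*} [∀ i, AddCommGroup (N i)] [∀ i, Module R (N i)] [AddCommGroup M] [Module R M]
    [AddCommGroup P] [Module R P] {j : ∀ i, N i →ₗ[R] M}
    (h_top : ⨆ i, LinearMap.range (j i) = ⊤) {f : M →ₗ[R] P} (hf : f ≠ 0) :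
    ∃ i, f ∘ₗ j i ≠ 0 := by
  contrapose! hf
  rw [← LinearMap.ker_eq_top, ← top_le_iff, ← h_top]
  exact iSup_le fun i => LinearMap.range_le_ker_iff.2 (hf i)

section DualAction

variable {k : Type*} [Field k] {V W C D : Type*} [AddCommGroup V] [Module k V]
  [AddCommGroup W] [Module k W] [AddCommGroup C] [Module k C] [AddCommGroup D] [Module k D]

lemma eq_of_forall_dual_apply_eq {x y : V} (h : ∀ φ : V →ₗ[k] k, φ x = φ y) : x = y :=
  Module.eval_apply_injective k (LinearMap.ext h)

/-- Contraction of the second tensor factor with a functional. -/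
noncomputable def evalRight (φ : C →ₗ[k] k) : V ⊗[k] C →ₗ[k] V :=
  (TensorProduct.rid k V).toLinearMap ∘ₗ φ.lTensor V

@[simp]
lemma evalRight_tmul (φ : C →ₗ[k] k) (v : V) (c : C) : evalRight φ (v ⊗ₜ[k] c) = φ c • v := by
  simp [evalRight]

lemma evalRight_rTensor (φ : C →ₗ[k] k) (f : V →ₗ[k] W) (t : V ⊗[k] C) :
    evalRight φ (f.rTensor C t) = f (evalRight φ t) := by
  induction t with
  | zero => simp
  | tmul v c => simp
  | add x y hx hy => simp only [map_add, hx, hy]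

lemma evalRight_lTensor (φ : D →ₗ[k] k) (p : C →ₗ[k] D) (t : V ⊗[k] C) :
    evalRight φ (p.lTensor V t) = evalRight (φ ∘ₗ p) t := by
  simp [evalRight, LinearMap.lTensor_comp]

lemma evalRight_ext {s t : V ⊗[k] C}
    (h : ∀ φ : C →ₗ[k] k, evalRight φ s = evalRight φ t) : s = t := by
  let b := Module.Free.chooseBasis k C
  refine (TensorProduct.equivFinsuppOfBasisRight (M := V) b).injective (Finsupp.ext fun i => ?_)
  rw [TensorProduct.equivFinsuppOfBasisRight_apply, TensorProduct.equivFinsuppOfBasisRight_apply]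
  exact h (b.coord i)

lemma mem_range_rTensor_subtype_iff (U : Submodule k V) (t : V ⊗[k] C) :
    t ∈ LinearMap.range (U.subtype.rTensor C) ↔ ∀ φ : C →ₗ[k] k, evalRight φ t ∈ U := by
  have exact_mkQ : Function.Exact (U.subtype.rTensor C) (U.mkQ.rTensor C) :=
    rTensor_exact C (LinearMap.exact_subtype_mkQ U) U.mkQ_surjective
  constructor
  · rintro ⟨s, rfl⟩ φ
    rw [evalRight_rTensor]
    exact (evalRight φ s).2
  · refine fun h => (exact_mkQ t).1 (evalRight_ext fun φ => ?_)
    rw [evalRight_rTensor, map_zero]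
    exact (Submodule.Quotient.mk_eq_zero U).2 (h φ)

lemma exists_finite_forall_evalRight_mem (t : V ⊗[k] C) :
    ∃ U : Submodule k V, Module.Finite k U ∧ ∀ φ : C →ₗ[k] k, evalRight φ t ∈ U := by
  induction t with
  | zero => exact ⟨⊥, inferInstance, by simp⟩
  | tmul v c =>
    refine ⟨k ∙ v, inferInstance, fun φ => ?_⟩
    rw [evalRight_tmul]
    exact Submodule.smul_mem _ _ (Submodule.mem_span_singleton_self v)
  | add x y hx hy =>
    obtain ⟨U, _, hU⟩ := hx
    obtain ⟨U', _, hU'⟩ := hy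
    refine ⟨U ⊔ U', inferInstance, fun φ => ?_⟩
    rw [map_add]
    exact Submodule.add_mem_sup (hU φ) (hU' φ)

/-- The operator `v ↦ φ(v₁) v₀` on `V` attached to a functional `φ` and a coaction `ρ`. -/
noncomputable def dualAct (ρ : V →ₗ[k] V ⊗[k] C) (φ : C →ₗ[k] k) : Module.End k V :=
  evalRight φ ∘ₗ ρ

/-- The matrix coefficients `v ↦ θ(v₀) v₁` of a coaction `ρ` attached to a functional `θ`. -/
noncomputable def coeffMap (ρ : V →ₗ[k] V ⊗[k] C) (θ : V →ₗ[k] k) : V →ₗ[k] C :=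
  (TensorProduct.lid k C).toLinearMap ∘ₗ θ.rTensor C ∘ₗ ρ

lemma apply_coeffMap (ρ : V →ₗ[k] V ⊗[k] C) (θ : V →ₗ[k] k) (φ : C →ₗ[k] k) (v : V) :
    φ (coeffMap ρ θ v) = θ (dualAct ρ φ v) := by
  have contract (t : V ⊗[k] C) :
      φ (TensorProduct.lid k C (θ.rTensor C t)) = θ (evalRight φ t) := by
    induction t with
    | zero => simp
    | tmul v c => simp [mul_comm]
    | add x y hx hy => simp only [map_add, hx, hy]
  exact contract (ρ v)

end DualAction

section ComodHom

variable {k : Type u} [Field k] {C D V W X : Type u} [AddCommGroup C] [Module k C]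
  [AddCommGroup D] [Module k D] [AddCommGroup V] [Module k V] [AddCommGroup W] [Module k W]
  [AddCommGroup X] [Module k X]
  {ρ ρV : V →ₗ[k] V ⊗[k] C} {ρW : W →ₗ[k] W ⊗[k] C} {ρX : X →ₗ[k] X ⊗[k] C}

lemma isSubcomod_iff_dualAct {U : Submodule k V} :
    IsSubcomod k C ρ U ↔ ∀ φ, ∀ u ∈ U, dualAct ρ φ u ∈ U := by
  simp only [IsSubcomod, mem_range_rTensor_subtype_iff]
  exact ⟨fun h φ u hu => h u hu φ, fun h u hu φ => h φ u hu⟩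

lemma isComodHom_iff_dualAct {f : V →ₗ[k] W} :
    IsComodHom k C ρV ρW f ↔ ∀ φ v, f (dualAct ρV φ v) = dualAct ρW φ (f v) := by
  constructor
  · intro h φ v
    exact (evalRight_rTensor φ f (ρV v)).symm.trans
      (congrArg (evalRight φ) (LinearMap.congr_fun h v)).symm
  · intro h
    ext v
    exact evalRight_ext fun φ => (h φ v).symm.trans (evalRight_rTensor φ f (ρV v)).symm

lemma dualAct_cores (p : C →ₗ[k] D) (φ : D →ₗ[k] k) :
    dualAct (cores k C p ρ) φ = dualAct ρ (φ ∘ₗ p) :=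
  LinearMap.ext fun v => evalRight_lTensor φ p (ρ v)

lemma IsComodHom.comp {g : W →ₗ[k] X} {f : V →ₗ[k] W} (hg : IsComodHom k C ρW ρX g)
    (hf : IsComodHom k C ρV ρW f) : IsComodHom k C ρV ρX (g ∘ₗ f) := by
  rw [isComodHom_iff_dualAct] at *
  intro φ v
  rw [LinearMap.comp_apply, hf, hg, LinearMap.comp_apply]

lemma IsComodHom.of_comp_surjective {g : W →ₗ[k] X} {f : V →ₗ[k] W}
    (hgf : IsComodHom k C ρV ρX (g ∘ₗ f)) (hf : IsComodHom k C ρV ρW f)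
    (hsurj : Function.Surjective f) : IsComodHom k C ρW ρX g := by
  rw [isComodHom_iff_dualAct] at *
  intro φ w
  obtain ⟨v, rfl⟩ := hsurj w
  rw [← hf]
  exact hgf φ v

lemma IsComodHom.of_comp_injective {g : W →ₗ[k] X} {f : V →ₗ[k] W}
    (hgf : IsComodHom k C ρV ρX (g ∘ₗ f)) (hg : IsComodHom k C ρW ρX g)
    (hinj : Function.Injective g) : IsComodHom k C ρV ρW f := by
  rw [isComodHom_iff_dualAct] at *
  exact fun φ v => hinj ((hgf φ v).trans (hg φ (f v)).symm)

lemma IsComodHom.sub {f g : V →ₗ[k] W} (hf : IsComodHom k C ρV ρW f)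
    (hg : IsComodHom k C ρV ρW g) : IsComodHom k C ρV ρW (f - g) := by
  rw [isComodHom_iff_dualAct] at *
  intro φ v
  simp only [LinearMap.sub_apply, map_sub, hf, hg]

lemma isComodHom_id : IsComodHom k C ρ ρ LinearMap.id :=
  isComodHom_iff_dualAct.2 fun _ _ => rfl

lemma IsComodHom.symm {e : V ≃ₗ[k] W} (h : IsComodHom k C ρV ρW e.toLinearMap) :
    IsComodHom k C ρW ρV e.symm.toLinearMap :=
  .of_comp_surjective (e.symm_comp ▸ isComodHom_id) h e.surjective

lemma IsComodHom.cores {f : V →ₗ[k] W} (hf : IsComodHom k C ρV ρW f) (p : C →ₗ[k] D) :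
    IsComodHom k D (cores k C p ρV) (cores k C p ρW) f := by
  rw [isComodHom_iff_dualAct] at *
  intro φ v
  rw [dualAct_cores, dualAct_cores, hf]

lemma IsComodHom.isSubcomod_ker {f : V →ₗ[k] W} (hf : IsComodHom k C ρV ρW f) :
    IsSubcomod k C ρV (LinearMap.ker f) := by
  rw [isSubcomod_iff_dualAct]
  intro φ v hv
  rw [LinearMap.mem_ker, isComodHom_iff_dualAct.1 hf, LinearMap.mem_ker.1 hv, map_zero]

lemma IsSubcomod.map {f : V →ₗ[k] W} (hf : IsComodHom k C ρV ρW f) {U : Submodule k V}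
    (hU : IsSubcomod k C ρV U) : IsSubcomod k C ρW (U.map f) := by
  rw [isSubcomod_iff_dualAct] at *
  rintro φ _ ⟨u, hu, rfl⟩
  rw [← isComodHom_iff_dualAct.1 hf]
  exact Submodule.mem_map_of_mem (hU φ u hu)

lemma isSubcomod_top : IsSubcomod k C ρ ⊤ :=
  isSubcomod_iff_dualAct.2 fun _ _ _ => Submodule.mem_top

lemma IsComodHom.isSubcomod_range {f : V →ₗ[k] W} (hf : IsComodHom k C ρV ρW f) :
    IsSubcomod k C ρW (LinearMap.range f) :=
  f.range_eq_map ▸ isSubcomod_top.map hf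

lemma IsSubcomod.exists_isComodHom_subtype {U : Submodule k V} (hU : IsSubcomod k C ρ U) :
    ∃ ρU : U →ₗ[k] U ⊗[k] C, IsComodHom k C ρU ρ U.subtype := by
  obtain ⟨r, hr⟩ := U.subtype.exists_leftInverse_of_injective U.ker_subtype
  refine ⟨r.rTensor C ∘ₗ ρ ∘ₗ U.subtype, isComodHom_iff_dualAct.2 fun φ u => ?_⟩
  have hmem : dualAct ρ φ u ∈ U := isSubcomod_iff_dualAct.1 hU φ u u.2
  calc (dualAct (r.rTensor C ∘ₗ ρ ∘ₗ U.subtype) φ u : V)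
      = r (dualAct ρ φ u) := congrArg _ (evalRight_rTensor φ r (ρ u))
    _ = dualAct ρ φ u := congrArg U.subtype (LinearMap.congr_fun hr ⟨_, hmem⟩)

lemma IsSimpleComod.eq_bot_or_eq_top (hρ : IsSimpleComod k C ρ) {U : Submodule k V}
    (hU : IsSubcomod k C ρ U) : U = ⊥ ∨ U = ⊤ :=
  hρ.2.2 U le_top hU

lemma IsSimpleComod.nontrivial (hρ : IsSimpleComod k C ρ) : Nontrivial V :=
  Submodule.nontrivial_iff k |>.1 ⟨⊤, ⊥, hρ.2.1⟩

lemma IsSimpleComod.injective (hρ : IsSimpleComod k C ρV) {f : V →ₗ[k] W}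
    (hf : IsComodHom k C ρV ρW f) (hne : f ≠ 0) : Function.Injective f :=
  LinearMap.ker_eq_bot.1 <|
    (hρ.eq_bot_or_eq_top hf.isSubcomod_ker).resolve_right (mt LinearMap.ker_eq_top.1 hne)

lemma IsSimpleComod.surjective (hρ : IsSimpleComod k C ρW) {f : V →ₗ[k] W}
    (hf : IsComodHom k C ρV ρW f) (hne : f ≠ 0) : Function.Surjective f :=
  LinearMap.range_eq_top.1 <|
    (hρ.eq_bot_or_eq_top hf.isSubcomod_range).resolve_left (mt LinearMap.range_eq_bot.1 hne)

lemma IsSimpleSubcomod.isSimpleComod {U : Submodule k V} (hU : IsSimpleSubcomod k C ρ U)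
    {ρU : U →ₗ[k] U ⊗[k] C} (hρU : IsComodHom k C ρU ρ U.subtype) : IsSimpleComod k C ρU := by
  refine ⟨isSubcomod_top, fun h => hU.2.1 ?_, fun U' _ hU' => ?_⟩
  · rw [← U.map_subtype_top, h, Submodule.map_bot]
  · have map_injective := Submodule.map_injective_of_injective U.injective_subtype
    exact (hU.2.2 _ (U.map_subtype_le U') (hU'.map hρU)).imp
      (fun h => map_injective (h.trans (Submodule.map_bot _).symm))
      (fun h => map_injective (h.trans U.map_subtype_top.symm))

/-- The algebra of operators generated by the action of the functionals on a comodule; its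
submodules are exactly the subcomodules. -/
def actionAlgebra (ρ : V →ₗ[k] V ⊗[k] C) : Subalgebra k (Module.End k V) :=
  Algebra.adjoin k (Set.range (dualAct ρ))

lemma IsSubcomod.smul_mem {U : Submodule k V} (hU : IsSubcomod k C ρ U) (a : actionAlgebra ρ)
    {u : V} (hu : u ∈ U) : a • u ∈ U := by
  rw [isSubcomod_iff_dualAct] at hU
  suffices ∀ T ∈ actionAlgebra ρ, ∀ u ∈ U, T u ∈ U from this a a.2 u hu
  intro T hT
  induction hT using Algebra.adjoin_induction with
  | mem _ hx => obtain ⟨φ, rfl⟩ := hx; exact hU φ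
  | algebraMap c => exact fun u => U.smul_mem c
  | add _ _ _ _ hS hT => exact fun u hu => U.add_mem (hS u hu) (hT u hu)
  | mul _ _ _ _ hS hT => exact fun u hu => hS _ (hT u hu)

/-- A subcomodule, seen as a submodule over the algebra of operators. -/
def IsSubcomod.toSubmodule {U : Submodule k V} (hU : IsSubcomod k C ρ U) :
    Submodule (actionAlgebra ρ) V :=
  { U with smul_mem' := fun a _ => hU.smul_mem a }

lemma dualAct_apply_mem (U : Submodule (actionAlgebra ρ) V) (φ : C →ₗ[k] k) {u : V} (hu : u ∈ U) :
    dualAct ρ φ u ∈ U :=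
  U.smul_mem ⟨_, Algebra.subset_adjoin ⟨φ, rfl⟩⟩ hu

lemma isSubcomod_restrictScalars (U : Submodule (actionAlgebra ρ) V) :
    IsSubcomod k C ρ (U.restrictScalars k) :=
  isSubcomod_iff_dualAct.2 fun φ _ hu => dualAct_apply_mem U φ hu

lemma IsSimpleSubcomod.isAtom_toSubmodule {U : Submodule k V} (hU : IsSimpleSubcomod k C ρ U) :
    IsAtom hU.1.toSubmodule := by
  have restrictScalars_injective :=
    Submodule.restrictScalars_injective k (actionAlgebra ρ) V
  refine ⟨fun h => hU.2.1 (congrArg (Submodule.restrictScalars k) h),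
    fun U' hU' => restrictScalars_injective ?_⟩
  exact (hU.2.2 _ hU'.le (isSubcomod_restrictScalars U')).resolve_right
    fun h => hU'.ne (restrictScalars_injective h)

lemma isSemisimpleModule_actionAlgebra {ι : Type*} {U : ι → Submodule k V}
    (hU : ∀ i, IsSimpleSubcomod k C ρ (U i)) (h_top : ⨆ i, U i = ⊤) :
    IsSemisimpleModule (actionAlgebra ρ) V := by
  have (i : ι) : IsSimpleModule (actionAlgebra ρ) (hU i).1.toSubmodule :=
    isSimpleModule_iff_isAtom.2 (hU i).isAtom_toSubmodule
  refine isSemisimpleModule_of_isSemisimpleModule_submodule' (p := fun i => (hU i).1.toSubmodule)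
    (fun _ => inferInstance) (Submodule.restrictScalars_injective k _ _ (top_le_iff.1 ?_))
  rw [← h_top]
  exact iSup_le fun i => le_iSup (fun i => (hU i).1.toSubmodule) i

lemma IsSubcomod.exists_isProj [IsSemisimpleModule (actionAlgebra ρ) V] {U : Submodule k V}
    (hU : IsSubcomod k C ρ U) :
    ∃ P : V →ₗ[k] V, IsComodHom k C ρ ρ P ∧ LinearMap.IsProj U P := by
  obtain ⟨U', hU'⟩ := exists_isCompl hU.toSubmodule
  let P := hU.toSubmodule.projection U' hU'
  refine ⟨P.restrictScalars k, isComodHom_iff_dualAct.2 fun φ v => ?_, ?_, ?_⟩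
  · exact P.map_smul ⟨_, Algebra.subset_adjoin ⟨φ, rfl⟩⟩ v
  · exact Submodule.projection_apply_mem hU'
  · exact fun u hu => Submodule.projection_apply_of_mem_left hU' hu

lemma IsComodHom.exists_section [IsSemisimpleModule (actionAlgebra ρV) V] {f : V →ₗ[k] W}
    (hf : IsComodHom k C ρV ρW f) (hsurj : Function.Surjective f) :
    ∃ s : W →ₗ[k] V, IsComodHom k C ρW ρV s ∧ f ∘ₗ s = LinearMap.id := by
  obtain ⟨P, hP, h_proj⟩ := hf.isSubcomod_ker.exists_isProj
  obtain ⟨s, hs⟩ := f.exists_rightInverse_of_surjective (LinearMap.range_eq_top.2 hsurj)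
  have comp_eq : (s - P ∘ₗ s) ∘ₗ f = LinearMap.id - P := by
    ext v
    have h_mem : s (f v) - v ∈ LinearMap.ker f := by
      simpa [sub_eq_zero] using LinearMap.congr_fun hs (f v)
    have h_fixed := h_proj.map_id _ h_mem
    rw [map_sub] at h_fixed
    exact sub_eq_sub_iff_sub_eq_sub.1 h_fixed.symm
  refine ⟨s - P ∘ₗ s, .of_comp_surjective (comp_eq ▸ isComodHom_id.sub hP) hf hsurj, ?_⟩
  ext w
  rw [LinearMap.comp_apply, LinearMap.sub_apply, map_sub, LinearMap.comp_apply,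
    LinearMap.mem_ker.1 (h_proj.map_mem _), sub_zero]
  exact LinearMap.congr_fun hs w

lemma IsComodHom.exists_retraction [IsSemisimpleModule (actionAlgebra ρW) W] {f : V →ₗ[k] W}
    (hf : IsComodHom k C ρV ρW f) (hinj : Function.Injective f) :
    ∃ r : W →ₗ[k] V, IsComodHom k C ρW ρV r ∧ r ∘ₗ f = LinearMap.id := by
  obtain ⟨P, hP, h_proj⟩ := hf.isSubcomod_range.exists_isProj
  obtain ⟨r, hr⟩ := f.exists_leftInverse_of_injective (LinearMap.ker_eq_bot.2 hinj)
  have comp_eq : f ∘ₗ r ∘ₗ P = P := by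
    ext w
    obtain ⟨v, hv⟩ := h_proj.map_mem w
    rw [LinearMap.comp_apply, LinearMap.comp_apply, ← hv]
    exact congrArg f (LinearMap.congr_fun hr v)
  refine ⟨r ∘ₗ P, .of_comp_injective (by rwa [comp_eq]) hf hinj, ?_⟩
  rw [LinearMap.comp_assoc, ← hr]
  exact congrArg (r ∘ₗ ·) (LinearMap.ext fun v => h_proj.map_id _ ⟨v, rfl⟩)

end ComodHom

section Comodules

open WithConv

variable {k : Type u} [Field k] {C D V W : Type u} [AddCommGroup C] [Module k C] [Coalgebra k C]
  [AddCommGroup V] [Module k V] [AddCommGroup W] [Module k W]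
  {ρ ρV : V →ₗ[k] V ⊗[k] C} {ρW : W →ₗ[k] W ⊗[k] C}

lemma evalRight_evalRight_comul (φ ψ : C →ₗ[k] k) (t : V ⊗[k] C) :
    evalRight φ (evalRight ψ ((TensorProduct.assoc k V C C).symm.toLinearMap
      ((Coalgebra.comul (R := k) (A := C)).lTensor V t))) =
      evalRight (toConv φ * toConv ψ).ofConv t := by
  have contract_assoc (v : V) (d : C ⊗[k] C) :
      evalRight φ (evalRight ψ ((TensorProduct.assoc k V C C).symm (v ⊗ₜ[k] d))) =
        LinearMap.mul' k k (TensorProduct.map φ ψ d) • v := by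
    induction d with
    | zero => simp
    | tmul c c' => simp [smul_smul, mul_comm]
    | add x y hx hy => simp only [TensorProduct.tmul_add, map_add, hx, hy, add_smul]
  induction t with
  | zero => simp
  | add x y hx hy => simp only [map_add, hx, hy]
  | tmul v c =>
    rw [LinearMap.lTensor_tmul, evalRight_tmul]
    exact contract_assoc v (Coalgebra.comul c)

theorem isComod_iff_dualAct :
    IsComod k C ρ ↔ dualAct ρ Coalgebra.counit = 1 ∧
      ∀ φ ψ : C →ₗ[k] k, dualAct ρ (toConv φ * toConv ψ).ofConv = dualAct ρ φ * dualAct ρ ψ := by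
  constructor
  · refine fun h => ⟨LinearMap.ext h.counit, fun φ ψ => LinearMap.ext fun v => ?_⟩
    have := congrArg (fun t => evalRight φ (evalRight ψ t)) (h.coassoc v)
    simp only [evalRight_rTensor, evalRight_evalRight_comul] at this
    exact this.symm
  · refine fun h => ⟨fun v => evalRight_ext fun ψ => evalRight_ext fun φ => ?_,
      LinearMap.congr_fun h.1⟩
    rw [evalRight_rTensor, evalRight_evalRight_comul]
    exact (LinearMap.congr_fun (h.2 φ ψ) v).symm

lemma IsComod.cores [AddCommGroup D] [Module k D] [Coalgebra k D] (hρ : IsComod k C ρ)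
    (p : C →ₗc[k] D) : IsComod k D (cores k C (p : C →ₗ[k] D) ρ) := by
  obtain ⟨h_counit, h_mul⟩ := isComod_iff_dualAct.1 hρ
  refine isComod_iff_dualAct.2 ⟨?_, fun φ ψ => ?_⟩
  · rw [dualAct_cores, ← h_counit]
    exact congrArg _ (CoalgHomClass.counit_comp p)
  · rw [dualAct_cores, dualAct_cores, dualAct_cores, ← h_mul]
    exact congrArg _ (LinearMap.convMul_comp_coalgHom_distrib (toConv φ) (toConv ψ) p)

lemma IsComod.of_injective (hρ : IsComod k C ρW) {f : V →ₗ[k] W} (hf : IsComodHom k C ρV ρW f)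
    (hinj : Function.Injective f) : IsComod k C ρV := by
  obtain ⟨h_counit, h_mul⟩ := isComod_iff_dualAct.1 hρ
  rw [isComodHom_iff_dualAct] at hf
  refine isComod_iff_dualAct.2 ⟨LinearMap.ext fun v => hinj ?_,
    fun φ ψ => LinearMap.ext fun v => hinj ?_⟩
  · rw [hf, h_counit, Module.End.one_apply, Module.End.one_apply]
  · rw [hf, h_mul, Module.End.mul_apply, Module.End.mul_apply, hf, hf]

lemma IsSimpleSubcomod.exists_simpleComodule (hρ : IsComod k C ρ) {U : Submodule k V}
    (hU : IsSimpleSubcomod k C ρ U) : ∃ (S : SimpleComodule k C) (f : S.V →ₗ[k] V),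
      IsComodHom k C S.ρ ρ f ∧ Function.Injective f ∧ LinearMap.range f = U := by
  obtain ⟨ρU, hρU⟩ := hU.1.exists_isComodHom_subtype
  exact ⟨⟨U, ρU, hρ.of_injective hρU U.injective_subtype, hU.isSimpleComod hρU⟩, U.subtype, hρU,
    U.injective_subtype, U.range_subtype⟩

lemma IsComod.exists_finite_isSubcomod_mem (hρ : IsComod k C ρ) (v : V) :
    ∃ U : Submodule k V, Module.Finite k U ∧ IsSubcomod k C ρ U ∧ v ∈ U := by
  obtain ⟨h_counit, h_mul⟩ := isComod_iff_dualAct.1 hρ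
  obtain ⟨F, _, hF⟩ := exists_finite_forall_evalRight_mem (ρ v)
  let U := Submodule.span k (Set.range fun φ => dualAct ρ φ v)
  have U_le : U ≤ F := Submodule.span_le.2 <| Set.range_subset_iff.2 hF
  refine ⟨U, Submodule.finiteDimensional_of_le U_le, isSubcomod_iff_dualAct.2 fun φ => ?_,
    Submodule.subset_span ⟨Coalgebra.counit, LinearMap.congr_fun h_counit v⟩⟩
  suffices U ≤ U.comap (dualAct ρ φ) from this
  refine Submodule.span_le.2 <| Set.range_subset_iff.2 fun ψ => Submodule.subset_span ?_
  exact ⟨(toConv φ * toConv ψ).ofConv, LinearMap.congr_fun (h_mul φ ψ) v⟩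

instance (S : SimpleComodule k C) : Module.Finite k S.V := by
  have := S.isSimple.nontrivial
  obtain ⟨v, hv⟩ := exists_ne (0 : S.V)
  obtain ⟨U, _, hU, hvU⟩ := S.isComod.exists_finite_isSubcomod_mem v
  have U_eq_top : U = ⊤ :=
    (S.isSimple.eq_bot_or_eq_top hU).resolve_left (Submodule.ne_bot_iff _ |>.2 ⟨v, hvU, hv⟩)
  exact Module.Finite.of_surjective U.subtype
    (LinearMap.range_eq_top.1 (U.range_subtype.trans U_eq_top))

lemma comodIsoRel_of_ne_zero {S T : SimpleComodule k C} {f : S.V →ₗ[k] T.V}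
    (hf : IsComodHom k C S.ρ T.ρ f) (hne : f ≠ 0) : comodIsoRel k C S T :=
  ⟨.ofBijective f ⟨S.isSimple.injective hf hne, T.isSimple.surjective hf hne⟩, hf⟩

lemma comodIsoRel_equivalence : Equivalence (comodIsoRel k C) where
  refl _ := ⟨.refl k _, isComodHom_id⟩
  symm := fun ⟨e, he⟩ => ⟨e.symm, he.symm⟩
  trans := fun ⟨e, he⟩ ⟨e', he'⟩ => ⟨e.trans e', he'.comp he⟩

lemma SimpleComodule.cls_eq_cls_iff {S T : SimpleComodule k C} :
    S.cls = T.cls ↔ comodIsoRel k C S T :=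
  ⟨fun h => comodIsoRel_equivalence.eqvGen_iff.1 (Quot.eqvGen_exact h), Quot.sound⟩

lemma IsCosemisimple.isSemisimpleModule (hC : IsCosemisimple k C) (hρ : IsComod k C ρ) :
    IsSemisimpleModule (actionAlgebra ρ) V := by
  obtain ⟨ι, U, hU, -, h_top⟩ := hC V ρ hρ
  exact isSemisimpleModule_actionAlgebra hU h_top

lemma IsCosemisimple.exists_simpleComodule_decomposition (hC : IsCosemisimple k C)
    (hρ : IsComod k C ρ) : ∃ (ι : Type u) (S : ι → SimpleComodule k C) (j : ∀ i, (S i).V →ₗ[k] V),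
      (∀ i, IsComodHom k C (S i).ρ ρ (j i)) ∧ (∀ i, Function.Injective (j i)) ∧
      iSupIndep (fun i => LinearMap.range (j i)) ∧ ⨆ i, LinearMap.range (j i) = ⊤ := by
  obtain ⟨ι, U, hU, h_indep, h_top⟩ := hC V ρ hρ
  choose S j hj h_inj h_range using fun i => (hU i).exists_simpleComodule hρ
  obtain rfl : (fun i => LinearMap.range (j i)) = U := funext h_range
  exact ⟨ι, S, j, hj, h_inj, h_indep, h_top⟩

lemma IsCosemisimple.exists_simpleComodule_comp_ne_zero {M : Type*} [AddCommGroup M] [Module k M]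
    (hC : IsCosemisimple k C) (hρ : IsComod k C ρ) {f : V →ₗ[k] M} (hf : f ≠ 0) :
    ∃ (S : SimpleComodule k C) (j : S.V →ₗ[k] V), IsComodHom k C S.ρ ρ j ∧ f ∘ₗ j ≠ 0 := by
  obtain ⟨ι, S, j, hj, -, -, h_top⟩ := hC.exists_simpleComodule_decomposition hρ
  obtain ⟨i, hi⟩ := exists_comp_ne_zero_of_iSup_range_eq_top h_top hf
  exact ⟨S i, j i, hj i, hi⟩

/-- The isomorphism classes of the simple comodules onto which a comodule maps. -/
def simpleQuotients (ρ : V →ₗ[k] V ⊗[k] C) : Set (SimpleComodQuot k C) :=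
  {w | ∃ S : SimpleComodule k C, S.cls = w ∧ ∃ f : V →ₗ[k] S.V, f ≠ 0 ∧ IsComodHom k C ρ S.ρ f}

lemma IsCosemisimple.finite_simpleQuotients [Module.Finite k V] (hC : IsCosemisimple k C)
    (hρ : IsComod k C ρ) : (simpleQuotients ρ).Finite := by
  obtain ⟨ι, S, j, hj, h_inj, h_indep, h_top⟩ := hC.exists_simpleComodule_decomposition hρ
  have range_ne_bot (i : ι) : LinearMap.range (j i) ≠ ⊥ := by
    have := (S i).isSimple.nontrivial
    exact mt LinearMap.range_eq_bot.1 (LinearMap.ne_zero_of_injective (h_inj i))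
  have : Finite ι := WellFoundedGT.finite_of_iSupIndep h_indep range_ne_bot
  refine (Set.finite_range fun i => (S i).cls).subset ?_
  rintro _ ⟨T, rfl, f, hf_ne, hf⟩
  obtain ⟨i, hi⟩ := exists_comp_ne_zero_of_iSup_range_eq_top h_top hf_ne
  exact ⟨i, SimpleComodule.cls_eq_cls_iff.2 (comodIsoRel_of_ne_zero (hf.comp (hj i)) hi)⟩

lemma IsCosemisimple.nonempty_simpleQuotients [Nontrivial V] (hC : IsCosemisimple k C)
    (hρ : IsComod k C ρ) : (simpleQuotients ρ).Nonempty := by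
  have := hC.isSemisimpleModule hρ
  obtain ⟨S, j, hj, hj_ne⟩ := hC.exists_simpleComodule_comp_ne_zero hρ
    (f := LinearMap.id) (LinearMap.ne_zero_of_injective Function.injective_id)
  obtain ⟨r, hr, hrj⟩ := hj.exists_retraction (S.isSimple.injective hj hj_ne)
  have := S.isSimple.nontrivial
  refine ⟨S.cls, S, rfl, r, fun h => ?_, hr⟩
  rw [h, LinearMap.zero_comp] at hrj
  exact LinearMap.ne_zero_of_injective Function.injective_id hrj.symm

lemma isComod_comul : IsComod k C (Coalgebra.comul (R := k) (A := C)) where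
  coassoc c := by
    rw [LinearEquiv.coe_coe, LinearEquiv.eq_symm_apply]
    exact Coalgebra.coassoc_apply c
  counit c := by
    rw [Coalgebra.lTensor_counit_comul, TensorProduct.rid_tmul, one_smul]

lemma apply_dualAct_comul (φ ψ : C →ₗ[k] k) (c : C) :
    φ (dualAct Coalgebra.comul ψ c) = (toConv φ * toConv ψ).ofConv c := by
  have contract (d : C ⊗[k] C) :
      φ (evalRight ψ d) = LinearMap.mul' k k (TensorProduct.map φ ψ d) := by
    induction d with
    | zero => simp
    | tmul c c' => simp [mul_comm]
    | add x y hx hy => simp only [map_add, hx, hy]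
  exact contract (Coalgebra.comul c)

lemma isComodHom_coeffMap (hρ : IsComod k C ρ) (θ : V →ₗ[k] k) :
    IsComodHom k C ρ Coalgebra.comul (coeffMap ρ θ) := by
  refine isComodHom_iff_dualAct.2 fun ψ v => eq_of_forall_dual_apply_eq (k := k) fun φ => ?_
  rw [apply_dualAct_comul, apply_coeffMap, apply_coeffMap, (isComod_iff_dualAct.1 hρ).2,
    Module.End.mul_apply]

lemma counit_coeffMap (hρ : IsComod k C ρ) (θ : V →ₗ[k] k) (v : V) :
    Coalgebra.counit (R := k) (coeffMap ρ θ v) = θ v := by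
  rw [apply_coeffMap, (isComod_iff_dualAct.1 hρ).1, Module.End.one_apply]

lemma IsCosemisimple.exists_isComodHom_comul_ne_zero (hC : IsCosemisimple k C)
    (S : SimpleComodule k C) :
    ∃ q : C →ₗ[k] S.V, IsComodHom k C Coalgebra.comul S.ρ q ∧ q ≠ 0 := by
  have := S.isSimple.nontrivial
  have := hC.isSemisimpleModule (isComod_comul (k := k) (C := C))
  obtain ⟨v, hv⟩ := exists_ne (0 : S.V)
  obtain ⟨θ, hθ⟩ : ∃ θ : S.V →ₗ[k] k, θ v ≠ 0 := by
    simpa [hv] using (Module.forall_dual_apply_eq_zero_iff k v).not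
  have hι := isComodHom_coeffMap S.isComod θ
  have hι_ne : coeffMap S.ρ θ ≠ 0 := fun h => hθ <| by
    rw [← counit_coeffMap S.isComod, h, LinearMap.zero_apply, map_zero]
  obtain ⟨q, hq, hqι⟩ := hι.exists_retraction (S.isSimple.injective hι hι_ne)
  refine ⟨q, hq, fun h => hv ?_⟩
  rw [h, LinearMap.zero_comp] at hqι
  exact LinearMap.congr_fun hqι.symm v

end Comodules

section MatrixMap

variable {k A B l m n : Type*} [CommRing k] [Ring A] [Algebra k A] [Ring B] [Algebra k B]
  [Fintype m] {T : Type*} [FunLike T A B] [LinearMapClass T k A B]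

lemma map_mul_map_algebraMap (f : T) (X : Matrix l m A) (F : Matrix m n k) :
    (X * F.map (algebraMap k A)).map f = X.map f * F.map (algebraMap k B) := by
  ext i j
  simp [Matrix.mul_apply, ← Algebra.commutes, ← Algebra.smul_def]

lemma map_map_algebraMap_mul (f : T) (F : Matrix l m k) (X : Matrix m n A) :
    (F.map (algebraMap k A) * X).map f = F.map (algebraMap k B) * X.map f := by
  ext i j
  simp [Matrix.mul_apply, ← Algebra.smul_def]

lemma mul_eq_mul_of_conj_mul_eq_mul_conj [Fintype n] [DecidableEq m] [DecidableEq n]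
    {x x' y : Matrix m m A} {z z' w : Matrix n n A} {F : Matrix m n A} (hx : x * x' = 1)
    (hz : z * z' = 1) (h : x' * y * x * F = F * (z' * w * z)) :
    y * (x * F * z') = x * F * z' * w :=
  calc y * (x * F * z') = x * x' * (y * (x * F * z')) := by rw [hx, Matrix.one_mul]
    _ = x * (x' * y * x * F) * z' := by simp only [Matrix.mul_assoc]
    _ = x * (F * (z' * w * z)) * z' := by rw [h]
    _ = x * F * z' * w * (z * z') := by simp only [Matrix.mul_assoc]
    _ = x * F * z' * w := by rw [hz, Matrix.mul_one]

end MatrixMap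

section TensorSlice

open Algebra.TensorProduct

variable {k A B l m n : Type*} [Field k] [Ring A] [Algebra k A] [Ring B] [Algebra k B] [Fintype m]

lemma map_evalRight_includeLeft_mul_includeRight (θ : A →ₗ[k] k) (X : Matrix l m B)
    (Y : Matrix m n A) :
    (X.map (includeLeft : B →ₐ[k] B ⊗[k] A) *
      Y.map (includeRight : A →ₐ[k] B ⊗[k] A)).map (evalRight θ) =
      X * (Y.map θ).map (algebraMap k B) := by
  ext i j
  simp [Matrix.mul_apply, ← Algebra.commutes, ← Algebra.smul_def]

lemma map_evalRight_includeRight_mul_includeLeft (θ : A →ₗ[k] k) (Y : Matrix l m A)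
    (X : Matrix m n B) :
    (Y.map (includeRight : A →ₐ[k] B ⊗[k] A) *
      X.map (includeLeft : B →ₐ[k] B ⊗[k] A)).map (evalRight θ) =
      (Y.map θ).map (algebraMap k B) * X := by
  ext i j
  simp [Matrix.mul_apply, ← Algebra.smul_def]

end TensorSlice

lemma matrix_ext_of_forall_dual {k C m n : Type*} [Field k] [AddCommGroup C] [Module k C]
    {X Y : Matrix m n C} (h : ∀ φ : C →ₗ[k] k, X.map φ = Y.map φ) : X = Y :=
  Matrix.ext fun i j => eq_of_forall_dual_apply_eq (k := k) fun φ => congrFun₂ (h φ) i j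

/-- A multiplicative matrix over a coalgebra: `Δ(aᵢⱼ) = ∑ₗ aᵢₗ ⊗ aₗⱼ` and `ε(aᵢⱼ) = δᵢⱼ`. -/
structure IsMultiplicative (k : Type*) {A n : Type*} [CommRing k] [AddCommGroup A] [Module k A]
    [Coalgebra k A] [Fintype n] [DecidableEq n] (a : Matrix n n A) : Prop where
  comul_apply : ∀ i j, Coalgebra.comul (R := k) (a i j) = ∑ l, a i l ⊗ₜ[k] a l j
  counit_apply : ∀ i j, Coalgebra.counit (R := k) (a i j) = (1 : Matrix n n k) i j

section Hopf

open HopfAlgebra Algebra.TensorProduct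

variable {k A B : Type u} {m n : Type*} [Field k] [Ring A] [HopfAlgebra k A] [Ring B] [Algebra k B]
  [Fintype n] [DecidableEq n] {a : Matrix n n A}

lemma IsMultiplicative.algebraMap_counit_apply (ha : IsMultiplicative k a) (i j : n) :
    algebraMap k A (Coalgebra.counit (a i j)) = (1 : Matrix n n A) i j := by
  rw [ha.counit_apply, Matrix.one_apply, Matrix.one_apply, apply_ite (algebraMap k A), map_one,
    map_zero]

lemma IsMultiplicative.mul_map_antipode (ha : IsMultiplicative k a) :
    a * a.map (antipode k) = 1 := by
  ext i j
  rw [← ha.algebraMap_counit_apply, ← mul_antipode_lTensor_comul_apply, ha.comul_apply]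
  simp [Matrix.mul_apply]

lemma IsMultiplicative.map_mul_map_map_antipode (ha : IsMultiplicative k a) {E : Type*} [Ring E]
    [Algebra k E] (f : A →ₐ[k] E) : a.map f * (a.map (antipode k)).map f = 1 := by
  rw [← Matrix.map_mul, ha.mul_map_antipode, Matrix.map_one _ (map_zero f) (map_one f)]

lemma IsMultiplicative.map_antipode_mul (ha : IsMultiplicative k a) :
    a.map (antipode k) * a = 1 := by
  ext i j
  rw [← ha.algebraMap_counit_apply, ← mul_antipode_rTensor_comul_apply, ha.comul_apply]
  simp [Matrix.mul_apply]

lemma IsMultiplicative.adR_apply (ha : IsMultiplicative k a) (i j : n) :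
    adR k A (a i j) = ∑ l, ∑ l', a l l' ⊗ₜ[k] (antipode k (a i l) * a l' j) := by
  simp [adR, comul2, ha.comul_apply, TensorProduct.tmul_sum]

lemma IsMultiplicative.map_map_of_comp_eq_adR (ha : IsMultiplicative k a) {p : A →ₗ[k] B}
    {R : B →ₗ[k] B ⊗[k] A} (hR : R ∘ₗ p = p.rTensor A ∘ₗ adR k A) :
    (a.map p).map R = (a.map (antipode k)).map (includeRight : A →ₐ[k] B ⊗[k] A) *
      (a.map p).map (includeLeft : B →ₐ[k] B ⊗[k] A) *
      a.map (includeRight : A →ₐ[k] B ⊗[k] A) := by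
  ext i j
  calc R (p (a i j)) = p.rTensor A (adR k A (a i j)) := LinearMap.congr_fun hR _
    _ = _ := by
      rw [ha.adR_apply, Finset.sum_comm]
      simp [Matrix.mul_apply, Finset.sum_mul]

variable [Fintype m] {b : Matrix m m A}

/-- The matrix `b F S(a)`. Applying a functional to its entries averages the scalar matrix `F` over
the quantum group. -/
def conjMatrix (b : Matrix m m A) (F : Matrix m n k) (a : Matrix n n A) : Matrix m n A :=
  b * F.map (algebraMap k A) * a.map (antipode k)

lemma conjMatrix_mul (ha : IsMultiplicative k a) (F : Matrix m n k) :
    conjMatrix b F a * a = b * F.map (algebraMap k A) := by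
  rw [conjMatrix, Matrix.mul_assoc, ha.map_antipode_mul, Matrix.mul_one]

theorem mul_map_conjMatrix_of_isRightNormal [DecidableEq m] {p : A →ₗ[k] B}
    (hp : IsRightNormal k A p) (hb : IsMultiplicative k b) (ha : IsMultiplicative k a)
    {F : Matrix m n k}
    (hF : b.map p * F.map (algebraMap k B) = F.map (algebraMap k B) * a.map p) (θ : A →ₗ[k] k) :
    b.map p * ((conjMatrix b F a).map θ).map (algebraMap k B) =
      ((conjMatrix b F a).map θ).map (algebraMap k B) * a.map p := by
  obtain ⟨R, hR⟩ := hp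
  -- Applying `R` to `hF` gives `S(b) p(b) b F = F S(a) p(a) a` over `B ⊗ A`.
  have h_desc := congrArg (fun X : Matrix m n B => X.map R) hF
  simp only [map_mul_map_algebraMap, map_map_algebraMap_mul, hb.map_map_of_comp_eq_adR hR,
    ha.map_map_of_comp_eq_adR hR] at h_desc
  rw [← map_evalRight_includeLeft_mul_includeRight, ← map_evalRight_includeRight_mul_includeLeft]
  congr 1
  rw [conjMatrix, Matrix.map_mul, map_mul_map_algebraMap]
  exact mul_eq_mul_of_conj_mul_eq_mul_conj (hb.map_mul_map_map_antipode _)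
    (ha.map_mul_map_map_antipode _) h_desc

end Hopf

section CoeffMatrix

open WithConv

variable {k C D V W : Type u} {n m : Type*} [Field k] [AddCommGroup C] [Module k C] [AddCommGroup D]
  [Module k D] [AddCommGroup V] [Module k V] [AddCommGroup W] [Module k W]
  {ρ : V →ₗ[k] V ⊗[k] C}

/-- The matrix `a` of a coaction in a basis: `ρ(bⱼ) = ∑ᵢ bᵢ ⊗ aᵢⱼ`. -/
noncomputable def coeffMatrix (ρ : V →ₗ[k] V ⊗[k] C) (b : Module.Basis n k V) : Matrix n n C :=
  Matrix.of fun i j => coeffMap ρ (b.coord i) (b j)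

lemma coeffMatrix_cores (b : Module.Basis n k V) (p : C →ₗ[k] D) :
    coeffMatrix (cores k C p ρ) b = (coeffMatrix ρ b).map p := by
  ext i j
  refine eq_of_forall_dual_apply_eq (k := k) fun φ => ?_
  calc φ (coeffMap (cores k C p ρ) (b.coord i) (b j))
      = b.coord i (dualAct ρ (φ ∘ₗ p) (b j)) := by rw [apply_coeffMap, dualAct_cores]
    _ = φ (p (coeffMap ρ (b.coord i) (b j))) := (apply_coeffMap ρ (b.coord i) (φ ∘ₗ p) (b j)).symm

variable [Fintype n] [DecidableEq n]

lemma map_coeffMatrix (b : Module.Basis n k V) (φ : C →ₗ[k] k) :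
    (coeffMatrix ρ b).map φ = LinearMap.toMatrix b b (dualAct ρ φ) := by
  ext i j
  rw [LinearMap.toMatrix_apply]
  exact apply_coeffMap ρ (b.coord i) φ (b j)

lemma isMultiplicative_coeffMatrix [Coalgebra k C] (hρ : IsComod k C ρ) (b : Module.Basis n k V) :
    IsMultiplicative k (coeffMatrix ρ b) where
  comul_apply i j := by
    refine evalRight_ext fun ψ => eq_of_forall_dual_apply_eq (k := k) fun φ => ?_
    have h_mul : (coeffMatrix ρ b).map (toConv φ * toConv ψ).ofConv =
        (coeffMatrix ρ b).map φ * (coeffMatrix ρ b).map ψ := by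
      simp only [map_coeffMatrix, (isComod_iff_dualAct.1 hρ).2, LinearMap.toMatrix_mul]
    calc φ (dualAct Coalgebra.comul ψ (coeffMatrix ρ b i j))
        = (toConv φ * toConv ψ).ofConv (coeffMatrix ρ b i j) := apply_dualAct_comul φ ψ _
      _ = ∑ l, φ (coeffMatrix ρ b i l) * ψ (coeffMatrix ρ b l j) := congrFun₂ h_mul i j
      _ = _ := by simp [mul_comm]
  counit_apply i j := by
    refine congrFun₂ (?_ : (coeffMatrix ρ b).map (Coalgebra.counit (R := k)) = 1) i j
    rw [map_coeffMatrix, (isComod_iff_dualAct.1 hρ).1, LinearMap.toMatrix_one]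

lemma isComodHom_iff_coeffMatrix {B : Type u} [Ring B] [Algebra k B] [Fintype m]
    {ρV : V →ₗ[k] V ⊗[k] B} {ρW : W →ₗ[k] W ⊗[k] B} (bV : Module.Basis n k V)
    (bW : Module.Basis m k W) {f : V →ₗ[k] W} :
    IsComodHom k B ρV ρW f ↔
      coeffMatrix ρW bW * (LinearMap.toMatrix bV bW f).map (algebraMap k B) =
        (LinearMap.toMatrix bV bW f).map (algebraMap k B) * coeffMatrix ρV bV := by
  classical
  have map_eq_iff (φ : B →ₗ[k] k) :
      (coeffMatrix ρW bW * (LinearMap.toMatrix bV bW f).map (algebraMap k B)).map φ =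
        ((LinearMap.toMatrix bV bW f).map (algebraMap k B) * coeffMatrix ρV bV).map φ ↔
      ∀ v, dualAct ρW φ (f v) = f (dualAct ρV φ v) := by
    rw [map_mul_map_algebraMap, map_map_algebraMap_mul, map_coeffMatrix, map_coeffMatrix,
      Algebra.algebraMap_self, RingHom.coe_id, Matrix.map_id, ← LinearMap.toMatrix_comp,
      ← LinearMap.toMatrix_comp, (LinearMap.toMatrix bV bW).injective.eq_iff, LinearMap.ext_iff]
    rfl
  rw [isComodHom_iff_dualAct]
  exact ⟨fun h => matrix_ext_of_forall_dual fun φ => (map_eq_iff φ).2 fun v => (h φ v).symm,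
    fun h φ v => ((map_eq_iff φ).1 (congrArg (·.map φ) h) v).symm⟩

end CoeffMatrix

section Trace

variable {k : Type u} [Field k] {C V W : Type u} [AddCommGroup C] [Module k C]
  [AddCommGroup V] [Module k V] [AddCommGroup W] [Module k W]

/-- The trace of `V` in `W`: the span of the images of all comodule maps `V → W`. -/
def trace (ρV : V →ₗ[k] V ⊗[k] C) (ρW : W →ₗ[k] W ⊗[k] C) : Submodule k W :=
  ⨆ f : {f : V →ₗ[k] W // IsComodHom k C ρV ρW f}, LinearMap.range f.1

variable {ρV : V →ₗ[k] V ⊗[k] C} {ρW : W →ₗ[k] W ⊗[k] C}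

lemma IsComodHom.apply_mem_trace {f : V →ₗ[k] W} (hf : IsComodHom k C ρV ρW f) (v : V) :
    f v ∈ trace ρV ρW :=
  Submodule.mem_iSup_of_mem ⟨f, hf⟩ (LinearMap.mem_range_self f v)

lemma IsComodHom.trace_ne_bot {f : V →ₗ[k] W} (hf : IsComodHom k C ρV ρW f) (hne : f ≠ 0) :
    trace ρV ρW ≠ ⊥ := fun h =>
  hne <| LinearMap.ext fun v => (Submodule.mem_bot k).1 (h ▸ hf.apply_mem_trace v)

end Trace

section HopfTrace

variable {k A V W : Type u} {n m : Type*} [Field k] [Ring A] [HopfAlgebra k A] [AddCommGroup V]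
  [Module k V] [AddCommGroup W] [Module k W] [Fintype n] [DecidableEq n] [Fintype m]
  {ρV : V →ₗ[k] V ⊗[k] A} {ρW : W →ₗ[k] W ⊗[k] A}

lemma isComodHom_toLin_conjMatrix {B : Type u} [Ring B] [Algebra k B] {p : A →ₗ[k] B}
    (hp : IsRightNormal k A p) (hV : IsComod k A ρV) (hW : IsComod k A ρW)
    (bV : Module.Basis n k V) (bW : Module.Basis m k W) {f : V →ₗ[k] W}
    (hf : IsComodHom k B (cores k A p ρV) (cores k A p ρW) f) (θ : A →ₗ[k] k) :
    IsComodHom k B (cores k A p ρV) (cores k A p ρW) (Matrix.toLin bV bW <|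
      (conjMatrix (coeffMatrix ρW bW) (LinearMap.toMatrix bV bW f) (coeffMatrix ρV bV)).map θ) := by
  classical
  rw [isComodHom_iff_coeffMatrix bV bW, coeffMatrix_cores, coeffMatrix_cores] at hf ⊢
  rw [LinearMap.toMatrix_toLin]
  exact mul_map_conjMatrix_of_isRightNormal hp (isMultiplicative_coeffMatrix hW bW)
    (isMultiplicative_coeffMatrix hV bV) hf θ

lemma dualAct_apply_eq_sum_toLin_conjMatrix (hV : IsComod k A ρV) (bV : Module.Basis n k V)
    (bW : Module.Basis m k W) (f : V →ₗ[k] W) (φ : A →ₗ[k] k) (j : n) :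
    dualAct ρW φ (f (bV j)) = ∑ l, Matrix.toLin bV bW
      ((conjMatrix (coeffMatrix ρW bW) (LinearMap.toMatrix bV bW f) (coeffMatrix ρV bV)).map
        (φ ∘ₗ LinearMap.mulRight k (coeffMatrix ρV bV l j))) (bV l) := by
  classical
  set M := conjMatrix (coeffMatrix ρW bW) (LinearMap.toMatrix bV bW f) (coeffMatrix ρV bV)
  have toMatrix_eq : LinearMap.toMatrix bV bW (dualAct ρW φ ∘ₗ f) =
      (M * coeffMatrix ρV bV).map φ := by
    rw [conjMatrix_mul (isMultiplicative_coeffMatrix hV bV), map_mul_map_algebraMap,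
      map_coeffMatrix, Algebra.algebraMap_self, RingHom.coe_id, Matrix.map_id,
      ← LinearMap.toMatrix_comp]
  rw [← LinearMap.comp_apply, ← Matrix.toLin_toMatrix bV bW (dualAct ρW φ ∘ₗ f), toMatrix_eq]
  simp only [Matrix.toLin_self, Matrix.map_apply, Matrix.mul_apply, map_sum, Finset.sum_smul]
  exact Finset.sum_comm

theorem isSubcomod_trace_cores [Module.Finite k V] [Module.Finite k W] {B : Type u} [Ring B]
    [Algebra k B] {p : A →ₗ[k] B} (hp : IsRightNormal k A p)
    (hV : IsComod k A ρV) (hW : IsComod k A ρW) :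
    IsSubcomod k A ρW (trace (cores k A p ρV) (cores k A p ρW)) := by
  let bV := Module.finBasis k V
  let bW := Module.finBasis k W
  rw [isSubcomod_iff_dualAct]
  intro φ
  let T := trace (cores k A p ρV) (cores k A p ρW)
  suffices T ≤ T.comap (dualAct ρW φ) from this
  refine iSup_le fun ⟨f, hf⟩ => ?_
  rw [LinearMap.range_eq_map, ← bV.span_eq, Submodule.map_span_le]
  rintro _ ⟨j, rfl⟩
  rw [Submodule.mem_comap, dualAct_apply_eq_sum_toLin_conjMatrix hV bV bW]
  exact Submodule.sum_mem _ fun l _ =>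
    (isComodHom_toLin_conjMatrix hp hV hW bV bW hf _).apply_mem_trace (bV l)

end HopfTrace

section Slices

variable {k A B : Type u} [Field k] [Ring A] [HopfAlgebra k A] [Ring B] [Bialgebra k B]

theorem simpleQuotients_cores_subset (hB : IsCosemisimple k B) (p : A →ₗc[k] B)
    (hp : IsRightNormal k A (p : A →ₗ[k] B)) {X X' : SimpleComodule k A}
    (h_common : (simpleQuotients (cores k A (p : A →ₗ[k] B) X.ρ) ∩
      simpleQuotients (cores k A (p : A →ₗ[k] B) X'.ρ)).Nonempty) :
    simpleQuotients (cores k A (p : A →ₗ[k] B) X'.ρ) ⊆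
      simpleQuotients (cores k A (p : A →ₗ[k] B) X.ρ) := by
  obtain ⟨_, ⟨S, rfl, f, hf_ne, hf⟩, ⟨S', h_cls, f', hf'_ne, hf'⟩⟩ := h_common
  obtain ⟨e, he⟩ := SimpleComodule.cls_eq_cls_iff.1 h_cls.symm
  have := hB.isSemisimpleModule (X'.isComod.cores p)
  obtain ⟨s, hs, hfs⟩ := hf'.exists_section (S'.isSimple.surjective hf' hf'_ne)
  have lift_ne_zero : s ∘ₗ e.toLinearMap ∘ₗ f ≠ 0 := fun h => hf_ne <| by
    refine LinearMap.ext fun v => e.injective ?_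
    rw [← LinearMap.id_apply (R := k) (e (f v)), ← hfs]
    exact (congrArg f' (LinearMap.congr_fun h v)).trans (by simp)
  have trace_eq_top : trace (cores k A (p : A →ₗ[k] B) X.ρ) (cores k A (p : A →ₗ[k] B) X'.ρ) = ⊤ :=
    (X'.isSimple.eq_bot_or_eq_top (isSubcomod_trace_cores hp X.isComod X'.isComod)).resolve_left
      ((hs.comp (he.comp hf)).trace_ne_bot lift_ne_zero)
  rintro _ ⟨T, rfl, g, hg_ne, hg⟩
  obtain ⟨q, hq⟩ := exists_comp_ne_zero_of_iSup_range_eq_top trace_eq_top hg_ne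
  exact ⟨T, rfl, g ∘ₗ q.1, hq, hg.comp q.2⟩

theorem exists_mem_simpleQuotients_cores (hA : IsCosemisimple k A) (hB : IsCosemisimple k B)
    {p : A →ₗc[k] B} (hp : Function.Surjective p) (S : SimpleComodule k B) :
    ∃ X : SimpleComodule k A, S.cls ∈ simpleQuotients (cores k A (p : A →ₗ[k] B) X.ρ) := by
  obtain ⟨q, hq, hq_ne⟩ := hB.exists_isComodHom_comul_ne_zero S
  have hp_hom : IsComodHom k B (cores k A (p : A →ₗ[k] B) Coalgebra.comul) Coalgebra.comul
      (p : A →ₗ[k] B) := by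
    rw [IsComodHom, cores, ← LinearMap.comp_assoc, LinearMap.rTensor_comp_lTensor]
    exact (CoalgHomClass.map_comp_comul p).symm
  have hqp_ne : q ∘ₗ (p : A →ₗ[k] B) ≠ 0 :=
    fun h => hq_ne ((LinearMap.cancel_right hp).1 (h.trans (LinearMap.zero_comp _).symm))
  obtain ⟨X, j, hj, hj_ne⟩ := hA.exists_simpleComodule_comp_ne_zero isComod_comul hqp_ne
  exact ⟨X, S, rfl, _, hj_ne, (hq.comp hp_hom).comp (hj.cores (p : A →ₗ[k] B))⟩

end Slices

section Relation

variable {α β : Type*} {r : α → β → Prop}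

/-- A relation is difunctional if any two of its rows that meet are equal, equivalently if its
nonempty rows partition the codomain; Clifford theory says that `∼` is such a relation. -/
def IsDifunctional (r : α → β → Prop) : Prop :=
  ∀ ⦃a a' b b'⦄, r a b → r a' b → r a' b' → r a b'

lemma IsDifunctional.rel_iff_forall_rel_iff (hr : IsDifunctional r) {a a' : α} {b : β}
    (hab : r a b) : r a' b ↔ ∀ c, r a c ↔ r a' c :=
  ⟨fun ha'b _ => ⟨hr ha'b hab, hr hab ha'b⟩, fun h => (h b).1 hab⟩

lemma IsDifunctional.exists_rel_and_rel_iff (hr : IsDifunctional r) {a : α} {b c : β}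
    (hab : r a b) : (∃ a', r a' b ∧ r a' c) ↔ r a c :=
  ⟨fun ⟨_, ha'b, ha'c⟩ => hr hab ha'b ha'c, fun hac => ⟨a, hab, hac⟩⟩

lemma IsDifunctional.equivalence_exists_rel_and_rel (hr : IsDifunctional r)
    (h_total : ∀ b, ∃ a, r a b) : Equivalence fun b c => ∃ a, r a b ∧ r a c where
  refl b := (h_total b).imp fun _ h => ⟨h, h⟩
  symm := fun ⟨a, hab, hac⟩ => ⟨a, hac, hab⟩
  trans := fun ⟨a, hab, hac⟩ ⟨_, ha'c, ha'd⟩ => ⟨a, hab, hr hac ha'c ha'd⟩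

end Relation

section RelRes

variable {k G Hh : Type u} [Field k] [Ring G] [HopfAlgebra k G] [Ring Hh] [HopfAlgebra k Hh]
  {π : G →ₐc[k] Hh}

lemma relRes_cls_iff {X : SimpleComodule k G} {w : SimpleComodQuot k Hh} :
    relRes k π X.cls w ↔ w ∈ simpleQuotients (cores k G (π : G →ₗ[k] Hh) X.ρ) := by
  constructor
  · rintro ⟨X', S, h_cls, rfl, f, hf_ne, hf⟩
    obtain ⟨e, he⟩ := SimpleComodule.cls_eq_cls_iff.1 h_cls.symm
    refine ⟨S, rfl, f ∘ₗ e.toLinearMap, fun h => hf_ne ?_, hf.comp (he.cores _)⟩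
    exact (LinearMap.cancel_right e.surjective).1 (h.trans (LinearMap.zero_comp _).symm)
  · rintro ⟨S, rfl, f, hf_ne, hf⟩
    exact ⟨X, S, rfl, rfl, f, hf_ne, hf⟩

lemma relResG_equivalence : Equivalence (relResG k π) where
  refl _ _ := Iff.rfl
  symm h w := (h w).symm
  trans h h' w := (h w).trans (h' w)

theorem isDifunctional_relRes (hH : IsCosemisimple k Hh)
    (hπ : IsRightNormal k G (π : G →ₗ[k] Hh)) : IsDifunctional (relRes k π) := by
  rintro ⟨X⟩ ⟨X'⟩ w w' h h' h''
  exact relRes_cls_iff.2 <| simpleQuotients_cores_subset hH (π : G →ₗc[k] Hh) hπ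
    ⟨w, relRes_cls_iff.1 h, relRes_cls_iff.1 h'⟩ (relRes_cls_iff.1 h'')

theorem exists_relRes_left (hG : IsCosemisimple k G) (hH : IsCosemisimple k Hh)
    (hπ : Function.Surjective π) (w : SimpleComodQuot k Hh) : ∃ x, relRes k π x w := by
  obtain ⟨S⟩ := w
  obtain ⟨X, hX⟩ := exists_mem_simpleQuotients_cores hG hH (p := (π : G →ₗc[k] Hh)) hπ S
  exact ⟨X.cls, relRes_cls_iff.2 hX⟩

theorem exists_relRes_right (hH : IsCosemisimple k Hh) (x : SimpleComodQuot k G) :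
    ∃ w, relRes k π x w := by
  obtain ⟨X⟩ := x
  have := X.isSimple.nontrivial
  exact (hH.nonempty_simpleQuotients (X.isComod.cores (π : G →ₗc[k] Hh))).imp
    fun _ => relRes_cls_iff.2

theorem finite_setOf_relRes (hH : IsCosemisimple k Hh) (x : SimpleComodQuot k G) :
    {w | relRes k π x w}.Finite := by
  obtain ⟨X⟩ := x
  exact (hH.finite_simpleQuotients (X.isComod.cores (π : G →ₗc[k] Hh))).subset
    fun _ => relRes_cls_iff.1

end RelRes

end QG

open QG in
theorem statement_13_general (k : Type u) [Field k]
    (G Hh : Type u) [Ring G] [HopfAlgebra k G] [Ring Hh] [HopfAlgebra k Hh]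
    (π : G →ₐc[k] Hh) (hsurj : Function.Surjective π)
    (hcssG : IsCosemisimple k G) (hcssH : IsCosemisimple k Hh)
    (hnormr : IsRightNormal k G (π : G →ₗ[k] Hh)) :
    (Equivalence (relResG k π) ∧
      (∀ w : SimpleComodQuot k Hh, ∃ x₀ : SimpleComodQuot k G,
        {x | relRes k π x w} = {x | relResG k π x₀ x}) ∧
      (∀ x₀ : SimpleComodQuot k G, ∃ w : SimpleComodQuot k Hh,
        {x | relResG k π x₀ x} = {x | relRes k π x w})) ∧
    (∃ r : SimpleComodQuot k Hh → SimpleComodQuot k Hh → Prop,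
      Equivalence r ∧
      (∀ x : SimpleComodQuot k G, {w | relRes k π x w}.Finite) ∧
      (∀ x : SimpleComodQuot k G, ∃ w₀ : SimpleComodQuot k Hh,
        {w | relRes k π x w} = {w | r w₀ w}) ∧
      (∀ w₀ : SimpleComodQuot k Hh, ∃ x : SimpleComodQuot k G,
        {w | r w₀ w} = {w | relRes k π x w})) := by
  have h_difun := isDifunctional_relRes hcssH hnormr
  have left_total := exists_relRes_left hcssG hcssH hsurj
  have right_total := exists_relRes_right (π := π) hcssH
  have left_slice {x₀ w} (h : relRes k π x₀ w) :
      {x | relRes k π x w} = {x | relResG k π x₀ x} :=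
    Set.ext fun _ => h_difun.rel_iff_forall_rel_iff h
  have right_slice {x w₀} (h : relRes k π x w₀) :
      {w | ∃ x', relRes k π x' w₀ ∧ relRes k π x' w} = {w | relRes k π x w} :=
    Set.ext fun _ => h_difun.exists_rel_and_rel_iff h
  exact ⟨⟨relResG_equivalence, fun w => (left_total w).imp fun _ => left_slice,
      fun x₀ => (right_total x₀).imp fun _ h => (left_slice h).symm⟩,
    _, h_difun.equivalence_exists_rel_and_rel left_total, finite_setOf_relRes hcssH,
    fun x => (right_total x).imp fun _ h => (right_slice h).symm,
    fun w₀ => (left_total w₀).imp fun _ => right_slice⟩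

open QG in
/-- Let `H ⊴ G` be a normal embedding of linearly reductive
quantum groups and `∼` the relation of Theorem th:clifsum.  Then (a) the
left-hand slices `slice_W` are exactly the classes of the equivalence
relation `∼_G` ("same simple constituents upon restriction"), and (b) the
right-hand slices `_V slice` are exactly the (finite) classes of an
equivalence relation on `Ĥ`. -/
theorem statement_13 (k : Type u) [Field k] [IsAlgClosed k]
    (G Hh : Type u) [Ring G] [HopfAlgebra k G] [Ring Hh] [HopfAlgebra k Hh]
    (π : G →ₐc[k] Hh) (hsurj : Function.Surjective π)
    (hcssG : IsCosemisimple k G) (hcssH : IsCosemisimple k Hh)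
    (hnorml : IsLeftNormal k G (π : G →ₗ[k] Hh))
    (hnormr : IsRightNormal k G (π : G →ₗ[k] Hh)) :
    (Equivalence (relResG k π) ∧
      (∀ w : SimpleComodQuot k Hh, ∃ x₀ : SimpleComodQuot k G,
        {x | relRes k π x w} = {x | relResG k π x₀ x}) ∧
      (∀ x₀ : SimpleComodQuot k G, ∃ w : SimpleComodQuot k Hh,
        {x | relResG k π x₀ x} = {x | relRes k π x w})) ∧
    (∃ r : SimpleComodQuot k Hh → SimpleComodQuot k Hh → Prop,
      Equivalence r ∧
      (∀ x : SimpleComodQuot k G, {w | relRes k π x w}.Finite) ∧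
      (∀ x : SimpleComodQuot k G, ∃ w₀ : SimpleComodQuot k Hh,
        {w | relRes k π x w} = {w | r w₀ w}) ∧
      (∀ w₀ : SimpleComodQuot k Hh, ∃ x : SimpleComodQuot k G,
        {w | r w₀ w} = {w | relRes k π x w})) :=
  statement_13_general k G Hh π hsurj hcssG hcssH hnormr
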